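/- Let J ∈ ℝ^{2N×2N} be an invertible skew-symmetric matrix, let H : ℝ → ℝ^{2N×2N} satisfy H(t)ᵀ = H(t) for all t, and let u ∈ ℝ^{2N}. Suppose X̃ : ℝ → ℝ^{2N×2N} is differentiable and satisfies J·X̃′(t) = (I − uuᵀJ)ᵀ H(t) (I − uuᵀJ)·X̃(t) for all t, together with X̃(0) = I + uuᵀJ. Then the function X(t) := (I − uuᵀJ)·X̃(t) is differentiable and satisfies J·X′(t) = H(t)·X(t) for all t with X(0) = I; equivalently, X̃(t) = (I + uuᵀJ)·X(t) where X solves the unperturbed Hamiltonian system with X(0) = I. -/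

import Mathlib

open Matrix

/-!
Let `K = uuᵀJ`. Skew symmetry of `J` makes `K` skew-adjoint for the form `J`, and it forces
`uᵀJu = 0`, hence `K² = 0`. So `S = I + K` is the exponential of an element of the Lie algebra of
`J`: it preserves `J`, and `S⁻¹ = I - K`. A linear change of variables `X = S⁻¹X̃` preserving `J`
carries solutions of the system with coefficient `(S⁻¹)ᵀ H S⁻¹` to solutions of the system with
coefficient `H`, because `J S⁻¹ X̃′ = Sᵀ J X̃′ = Sᵀ (S⁻¹)ᵀ H S⁻¹ X̃ = H X`.
-/

section SkewForm

variable {n R : Type*} [Fintype n] [CommRing R] {J : Matrix n n R}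

lemma dotProduct_mulVec_self_eq_zero_of_transpose_eq_neg [NoZeroDivisors R] [NeZero (2 : R)]
    (hJ : Jᵀ = -J) (u : n → R) : u ⬝ᵥ J *ᵥ u = 0 := by
  have h : -(u ⬝ᵥ J *ᵥ u) = u ⬝ᵥ J *ᵥ u := by
    rw [← dotProduct_neg, ← neg_mulVec, ← hJ, dotProduct_transpose_mulVec]
  have h2 : 2 * (u ⬝ᵥ J *ᵥ u) = 0 := by linear_combination -h
  exact (mul_eq_zero.mp h2).resolve_left two_ne_zero

lemma vecMulVec_mul_mul_self_eq_zero {m : Type*} [Fintype m] {M : Matrix m n R} {u : n → R}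
    {v : m → R} (h : v ⬝ᵥ M *ᵥ u = 0) : vecMulVec u v * M * (vecMulVec u v * M) = 0 := by
  rw [← Matrix.mul_assoc, Matrix.mul_assoc _ M, mul_vecMulVec, vecMulVec_mul_vecMulVec, h,
    vecMulVec_smul, zero_smul, Matrix.zero_mul]

lemma isSkewAdjoint_mul_of_isSymm {P : Matrix n n R} (hP : P.IsSymm) (hJ : Jᵀ = -J) :
    J.IsSkewAdjoint (P * J) := by
  change (P * J)ᵀ * J = J * -(P * J)
  rw [transpose_mul, hP.eq, hJ, Matrix.neg_mul, Matrix.neg_mul, Matrix.mul_neg, Matrix.mul_assoc]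

lemma isAdjointPair_one_add_one_sub [DecidableEq n] {K : Matrix n n R} (hK : J.IsSkewAdjoint K) :
    J.IsAdjointPair J (1 + K) (1 - K) := by
  have hK' : Kᵀ * J = J * -K := hK
  change (1 + K)ᵀ * J = J * (1 - K)
  rw [transpose_add, transpose_one, Matrix.add_mul, hK', sub_eq_add_neg, Matrix.mul_add,
    Matrix.one_mul, Matrix.mul_one]

end SkewForm

lemma one_add_mul_one_sub_eq_one_of_mul_self_eq_zero {R : Type*} [Ring R] {K : R}
    (hK : K * K = 0) : (1 + K) * (1 - K) = 1 := by
  rw [← (Commute.one_left K).mul_self_sub_mul_self_eq, hK, mul_one, sub_zero]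

lemma hasDerivAt_const_mul_apply {𝕜 𝔸 m n p : Type*} [NontriviallyNormedField 𝕜] [NormedRing 𝔸]
    [NormedAlgebra 𝕜 𝔸] [Fintype n] (A : Matrix m n 𝔸) {X : 𝕜 → Matrix n p 𝔸}
    {X' : Matrix n p 𝔸} {t : 𝕜} (hX : ∀ i j, HasDerivAt (fun s => X s i j) (X' i j) t)
    (i : m) (j : p) : HasDerivAt (fun s => (A * X s) i j) ((A * X') i j) t := by
  simp only [mul_apply]
  exact HasDerivAt.fun_sum fun k _ => (hX k j).const_mul (A i k)

/-- `X` is a solution of the linear system `J·X′(t) = H(t)·X(t)`. The derivative is taken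
entrywise, as matrices carry no canonical norm. `X` may have any number of columns, so this covers
both single trajectories and fundamental solutions. -/
def SolvesHamiltonianSystem {𝕜 𝔸 n p : Type*} [NontriviallyNormedField 𝕜] [NormedRing 𝔸]
    [NormedAlgebra 𝕜 𝔸] [Fintype n] (J : Matrix n n 𝔸) (H : 𝕜 → Matrix n n 𝔸)
    (X : 𝕜 → Matrix n p 𝔸) : Prop :=
  ∀ t, ∃ X' : Matrix n p 𝔸, (∀ i j, HasDerivAt (fun s => X s i j) (X' i j) t) ∧
    J * X' = H t * X t

lemma SolvesHamiltonianSystem.const_mul {𝕜 𝔸 m n p : Type*} [NontriviallyNormedField 𝕜]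
    [NormedCommRing 𝔸] [NormedAlgebra 𝕜 𝔸] [Fintype m] [Fintype n] [DecidableEq m]
    {J₁ : Matrix m m 𝔸} {J₂ : Matrix n n 𝔸} {S : Matrix n m 𝔸} {A : Matrix m n 𝔸}
    {H : 𝕜 → Matrix m m 𝔸} {X : 𝕜 → Matrix n p 𝔸}
    (hX : SolvesHamiltonianSystem J₂ (fun t => Aᵀ * H t * A) X)
    (hSA : J₁.IsAdjointPair J₂ S A) (hAS : A * S = 1) :
    SolvesHamiltonianSystem J₁ H (fun t => A * X t) := by
  intro t
  obtain ⟨X', hX', hsys⟩ := hX t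
  have hadj : Sᵀ * J₂ = J₁ * A := hSA
  have hinv : Sᵀ * Aᵀ = 1 := by rw [← transpose_mul, hAS, transpose_one]
  refine ⟨A * X', hasDerivAt_const_mul_apply A hX', ?_⟩
  calc J₁ * (A * X') = Sᵀ * (J₂ * X') := by rw [← Matrix.mul_assoc, ← hadj, Matrix.mul_assoc]
    _ = Sᵀ * Aᵀ * (H t * (A * X t)) := by rw [hsys]; simp only [Matrix.mul_assoc]
    _ = H t * (A * X t) := by rw [hinv, Matrix.one_mul]

theorem solution_of_perturbed_system_is_rankOnePerturbation_general {𝕜 𝕂 n : Type*}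
    [NontriviallyNormedField 𝕜] [NormedField 𝕂] [NormedAlgebra 𝕜 𝕂] [NeZero (2 : 𝕂)]
    [Fintype n] [DecidableEq n] {J : Matrix n n 𝕂} (hJ : Jᵀ = -J) {H : 𝕜 → Matrix n n 𝕂}
    {u : n → 𝕂} {X : 𝕜 → Matrix n n 𝕂}
    (hX : SolvesHamiltonianSystem J
      (fun t => (1 - vecMulVec u u * J)ᵀ * H t * (1 - vecMulVec u u * J)) X)
    (hX0 : X 0 = 1 + vecMulVec u u * J) :
    SolvesHamiltonianSystem J H (fun t => (1 - vecMulVec u u * J) * X t) ∧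
      (1 - vecMulVec u u * J) * X 0 = 1 ∧
      ∀ t, X t = (1 + vecMulVec u u * J) * ((1 - vecMulVec u u * J) * X t) := by
  have hskew : J.IsSkewAdjoint (vecMulVec u u * J) :=
    isSkewAdjoint_mul_of_isSymm (transpose_vecMulVec u u) hJ
  have hright : (1 + vecMulVec u u * J) * (1 - vecMulVec u u * J) = 1 :=
    one_add_mul_one_sub_eq_one_of_mul_self_eq_zero <|
      vecMulVec_mul_mul_self_eq_zero (dotProduct_mulVec_self_eq_zero_of_transpose_eq_neg hJ u)
  have hleft : (1 - vecMulVec u u * J) * (1 + vecMulVec u u * J) = 1 := mul_eq_one_comm.mp hright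
  refine ⟨hX.const_mul (isAdjointPair_one_add_one_sub hskew) hleft, ?_, fun t => ?_⟩
  · rw [hX0, hleft]
  · rw [← Matrix.mul_assoc, hright, Matrix.one_mul]

/-- **Corollary 3.** Let `J` be invertible skew-symmetric and `H(t)` symmetric.
If `X̃` solves the rank one perturbed Hamiltonian system
`J·X̃′(t) = (I − uuᵀJ)ᵀ H(t) (I − uuᵀJ)·X̃(t)` with `X̃(0) = I + uuᵀJ`, then
`X(t) := (I − uuᵀJ)·X̃(t)` is differentiable and solves the unperturbed system
`J·X′(t) = H(t)·X(t)` with `X(0) = I`, and `X̃(t) = (I + uuᵀJ)·X(t)` for all `t`.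
Differentiability is expressed entrywise. -/
theorem solution_of_perturbed_system_is_rankOnePerturbation (N : ℕ) (hN : 0 < N)
    (J : Matrix (Fin (2 * N)) (Fin (2 * N)) ℝ)
    (hJinv : IsUnit J) (hJskew : Jᵀ = -J)
    (H : ℝ → Matrix (Fin (2 * N)) (Fin (2 * N)) ℝ)
    (hH : ∀ t, (H t)ᵀ = H t)
    (u : Fin (2 * N) → ℝ)
    (Xp Xp' : ℝ → Matrix (Fin (2 * N)) (Fin (2 * N)) ℝ)
    (hXp : ∀ t i j, HasDerivAt (fun s => Xp s i j) (Xp' t i j) t)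
    (hsys : ∀ t, J * Xp' t =
      (1 - vecMulVec u u * J)ᵀ * H t * (1 - vecMulVec u u * J) * Xp t)
    (hXp0 : Xp 0 = 1 + vecMulVec u u * J) :
    (∀ t : ℝ, ∃ Y : Matrix (Fin (2 * N)) (Fin (2 * N)) ℝ,
        (∀ i j, HasDerivAt (fun s => ((1 - vecMulVec u u * J) * Xp s) i j) (Y i j) t) ∧
        J * Y = H t * ((1 - vecMulVec u u * J) * Xp t)) ∧
      (1 - vecMulVec u u * J) * Xp 0 = 1 ∧
      (∀ t : ℝ, Xp t = (1 + vecMulVec u u * J) * ((1 - vecMulVec u u * J) * Xp t)) :=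
  solution_of_perturbed_system_is_rankOnePerturbation_general hJskew
    (fun t => ⟨Xp' t, hXp t, hsys t⟩) hXp0
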